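/- Let ℚ be a quasi-tree of an oriented ribbon graph 𝔾 and let C be the sub-chord-diagram of C_ℚ consisting of chords corresponding to edges of ℚ. Then the genus of ℚ equals half the rank over 𝔽₂ of the adjacency matrix of the intersection graph of C. -/

import Mathlib

open Equiv

abbrev HalfEdge (n : ℕ) := Fin n × Bool

/-- The permutation of half-edges that flips the two half-edges of each edge in `H`. -/
def flipOn (n : ℕ) (H : Finset (Fin n)) : Equiv.Perm (HalfEdge n) :=
  Function.Involutive.toPerm
    (fun p => if p.1 ∈ H then (p.1, !p.2) else p)
    (by intro p; by_cases h : p.1 ∈ H <;> simp [h])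

/-- Number of orbits (cycles) of a permutation. -/
noncomputable def orbitCount {α : Type*} (σ : Equiv.Perm α) : ℕ :=
  Nat.card (MulAction.orbitRel.Quotient (Subgroup.zpowers σ) α)

/-- Number of faces of the spanning ribbon subgraph with edge set `H` of the ribbon
graph with vertex permutation `σ₀`. -/
noncomputable def faceCount {n : ℕ} (σ₀ : Equiv.Perm (HalfEdge n)) (H : Finset (Fin n)) : ℕ :=
  orbitCount (σ₀ * flipOn n H)

/-- Chords `i` and `j` of the chord diagram `C_ℚ` of a quasi-tree `ℚ` intersect iff the
boundary of `ℚ ∆ {i, j}` is a single curve (unzipping along one disconnects, along the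
other reconnects). -/
def chordsIntersect {n : ℕ} (σ₀ : Equiv.Perm (HalfEdge n)) (Q : Finset (Fin n))
    (i j : Fin n) : Prop :=
  i ≠ j ∧ faceCount σ₀ (symmDiff Q {i, j}) = 1

/-- The adjacency matrix over `𝔽₂` of the intersection graph of the sub-chord diagram of
`C_ℚ` consisting of the chords corresponding to edges of `ℚ`. -/
noncomputable def intersectionMatrix {n : ℕ} (σ₀ : Equiv.Perm (HalfEdge n))
    (Q : Finset (Fin n)) : Matrix Q Q (ZMod 2) :=
  fun i j =>
    if (i : Fin n) ≠ (j : Fin n) ∧ faceCount σ₀ (symmDiff Q {(i : Fin n), (j : Fin n)}) = 1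
    then 1 else 0


/-- Functions to `𝔽₂` invariant under a permutation. -/
def invFun2 {α : Type*} (σ : Equiv.Perm α) : Submodule (ZMod 2) (α → ZMod 2) where
  carrier := {f | ∀ x, f (σ x) = f x}
  add_mem' := by
    intro a b ha hb x
    simp [ha x, hb x]
  zero_mem' := by intro x; rfl
  smul_mem' := by
    intro c a ha x
    simp [ha x]

theorem mem_invFun2 {α : Type*} (σ : Equiv.Perm α) (f : α → ZMod 2) :
    f ∈ invFun2 σ ↔ ∀ x, f (σ x) = f x := Iff.rfl

theorem invFun2_zpow {α : Type*} (σ : Equiv.Perm α) (f : α → ZMod 2) (hf : f ∈ invFun2 σ)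
    (k : ℤ) (x : α) : f ((σ ^ k) x) = f x := by
  have hn : ∀ (k : ℕ) (x : α), f ((σ ^ k) x) = f x := by
    intro k
    induction k with
    | zero => intro x; simp
    | succ k ih => intro x; rw [pow_succ, Perm.mul_apply, ih]; exact hf x
  rcases Int.eq_nat_or_neg k with ⟨m, rfl | rfl⟩
  · simpa using hn m x
  · have := hn m ((σ ^ (-(m : ℤ))) x)
    rw [← this]
    simp

theorem finrank_invFun2 {α : Type*} [Finite α] (σ : Equiv.Perm α) :
    Module.finrank (ZMod 2) (invFun2 σ) = orbitCount σ := by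
  classical
  let Ω := MulAction.orbitRel.Quotient (Subgroup.zpowers σ) α
  let Φ : (Ω → ZMod 2) →ₗ[ZMod 2] (α → ZMod 2) :=
    LinearMap.funLeft (ZMod 2) (ZMod 2) (fun a : α => (Quotient.mk'' a : Ω))
  have hinj : Function.Injective Φ :=
    LinearMap.funLeft_injective_of_surjective _ _ _ (Quotient.mk''_surjective)
  have hr : LinearMap.range Φ = invFun2 σ := by
    ext f
    constructor
    · rintro ⟨g, rfl⟩ x
      show g _ = g _
      congr 1
      apply Quotient.sound
      exact ⟨⟨σ, Subgroup.mem_zpowers σ⟩, rfl⟩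
    · intro hf
      refine ⟨fun q => Quotient.liftOn' q f ?_, ?_⟩
      · rintro a b ⟨⟨s, k, rfl⟩, rfl⟩
        exact invFun2_zpow σ f hf k b
      · ext x
        rfl
  have : Finite Ω := Quotient.finite _
  have : Fintype Ω := Fintype.ofFinite _
  rw [← hr, LinearMap.finrank_range_of_inj hinj, Module.finrank_fintype_fun_eq_card, orbitCount,
    Nat.card_eq_fintype_card]

/-- The coboundary operator. -/
def cobd {α : Type*} (σ : Equiv.Perm α) : (α → ZMod 2) →ₗ[ZMod 2] (α → ZMod 2) where
  toFun f := fun x => f (σ x) + f x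
  map_add' := by intro f g; ext x; simp; ring
  map_smul' := by intro c f; ext x; simp; ring

theorem z2_add_eq_zero (a b : ZMod 2) : a + b = 0 ↔ a = b := by
  revert a b; decide

theorem ker_cobd {α : Type*} (σ : Equiv.Perm α) : LinearMap.ker (cobd σ) = invFun2 σ := by
  ext f
  rw [LinearMap.mem_ker, mem_invFun2, funext_iff]
  exact forall_congr' fun x => z2_add_eq_zero _ _

/-- Total sum functional. -/
def totSum (α : Type*) [Fintype α] : (α → ZMod 2) →ₗ[ZMod 2] ZMod 2 where
  toFun f := ∑ x, f x
  map_add' := by intro f g; simp [Finset.sum_add_distrib]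
  map_smul' := by intro c f; simp [Finset.mul_sum]

theorem exists_cobd {α : Type*} [Fintype α] (σ : Equiv.Perm α) (h : orbitCount σ = 1)
    (c : α → ZMod 2) (hc : ∑ x, c x = 0) : ∃ g, cobd σ g = c := by
  classical
  have hne : Nonempty α := by
    by_contra hne
    rw [not_nonempty_iff] at hne
    rw [← finrank_invFun2, Module.finrank_zero_of_subsingleton] at h
    exact absurd h (by norm_num)
  have hle : LinearMap.range (cobd σ) ≤ LinearMap.ker (totSum α) := by
    rintro _ ⟨f, rfl⟩
    show ∑ x, (f (σ x) + f x) = 0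
    rw [Finset.sum_add_distrib, Equiv.sum_comp σ f]
    exact CharTwo.add_self_eq_zero _
  have h1 := LinearMap.finrank_range_add_finrank_ker (cobd σ)
  rw [ker_cobd, finrank_invFun2, h] at h1
  have h2 := LinearMap.finrank_range_add_finrank_ker (totSum α)
  have hs : LinearMap.range (totSum α) = ⊤ := by
    rw [LinearMap.range_eq_top]
    intro z
    obtain ⟨a⟩ := hne
    refine ⟨Pi.single a z, ?_⟩
    show ∑ x, _ = z
    simp
  rw [hs, finrank_top, Module.finrank_self] at h2
  have := Submodule.eq_of_le_of_finrank_eq hle (by omega)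
  have hc' : c ∈ LinearMap.ker (totSum α) := hc
  rw [← this] at hc'
  exact hc'

theorem invFun2_const {α : Type*} [Finite α] (σ : Equiv.Perm α) (h : orbitCount σ = 1)
    (f : α → ZMod 2) (hf : f ∈ invFun2 σ) (x y : α) : f x = f y := by
  unfold orbitCount at h
  rw [Nat.card_eq_one_iff_unique] at h
  obtain ⟨h, -⟩ := h
  have := h.elim (Quotient.mk'' x) (Quotient.mk'' y)
  rw [Quotient.eq''] at this
  obtain ⟨⟨s, k, rfl⟩, rfl⟩ := this
  exact invFun2_zpow σ f hf k y

theorem exists_pow_of_orbitCount {α : Type*} [Finite α] (σ : Equiv.Perm α)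
    (h : orbitCount σ = 1) (x y : α) : ∃ k : ℕ, (σ ^ k) x = y := by
  unfold orbitCount at h
  rw [Nat.card_eq_one_iff_unique] at h
  obtain ⟨h, -⟩ := h
  have := h.elim (Quotient.mk'' y) (Quotient.mk'' x)
  rw [Quotient.eq''] at this
  obtain ⟨⟨s, k, rfl⟩, hk⟩ := this
  have hs : σ.SameCycle x y := ⟨k, hk⟩
  obtain ⟨i, hi⟩ := hs.exists_nat_pow_eq
  exact ⟨i, hi⟩

/-- The jump function of a chord takes different values at the two ends of the chord. -/
theorem jump_self {α : Type*} [Finite α] (σ : Equiv.Perm α) (h : orbitCount σ = 1)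
    (a b : α) (hab : a ≠ b) (g : α → ZMod 2)
    (ha : g (σ a) + g a = 1)
    (ho : ∀ x, x ≠ a → x ≠ b → g (σ x) + g x = 0) : g a + g b = 1 := by
  classical
  have hex := exists_pow_of_orbitCount σ h a b
  let k := Nat.find hex
  have hk : (σ ^ k) a = b := Nat.find_spec hex
  have hmin : ∀ m < k, (σ ^ m) a ≠ b := fun m hm => Nat.find_min hex hm
  have hk0 : k ≠ 0 := by
    intro h0
    rw [h0] at hk
    exact hab (by simpa using hk)
  have key : ∀ m, m + 1 ≤ k → g ((σ ^ (m + 1)) a) = g a + 1 := by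
    intro m
    induction m with
    | zero =>
      intro _
      rw [zero_add, pow_one]
      generalize g (σ a) = u at *
      generalize g a = v at *
      revert u v; decide
    | succ m ih =>
      intro hm
      have i1 := ih (by omega)
      have i2 := ho ((σ ^ (m + 1)) a) (by
        intro he
        apply hmin (k - (m + 1)) (by omega)
        rw [← hk]
        conv_rhs => rw [show k = (k - (m + 1)) + (m + 1) by omega, pow_add, Perm.mul_apply, he])
        (hmin _ (by omega))
      rw [pow_succ', Perm.mul_apply]
      rw [z2_add_eq_zero] at i2
      rw [i2, i1]
  have := key (k - 1) (by omega)
  rw [show k - 1 + 1 = k by omega, hk] at this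
  rw [this]
  generalize g a = v
  revert v; decide

/-- Indicator of the two ends of the edge `i`. -/
def chordFn {n : ℕ} (i : Fin n) : HalfEdge n → ZMod 2 := fun x => if x.1 = i then 1 else 0

theorem sum_mul_chordFn {n : ℕ} (i : Fin n) (f : HalfEdge n → ZMod 2) :
    ∑ x, f x * chordFn i x = f (i, false) + f (i, true) := by
  simp [Fintype.sum_prod_type, chordFn, Finset.sum_add_distrib, add_comm]

theorem sum_chordFn {n : ℕ} (i : Fin n) : ∑ x, chordFn i x = 0 := by
  have := sum_mul_chordFn i (fun _ => 1)
  simp only [one_mul] at this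
  rw [this]; decide

theorem flip_formula {n : ℕ} (H : Finset (Fin n)) (f : HalfEdge n → ZMod 2) (y : HalfEdge n) :
    f (flipOn n H y) = f y + ∑ i : H, (f (i, false) + f (i, true)) * chordFn (i : Fin n) y := by
  rw [Finset.sum_coe_sort H (fun i => (f (i, false) + f (i, true)) * chordFn (i : Fin n) y)]
  obtain ⟨a, b⟩ := y
  have e : flipOn n H (a, b) = if a ∈ H then (a, !b) else (a, b) := rfl
  rw [e]
  simp only [chordFn, mul_ite, mul_one, mul_zero, Finset.sum_ite_eq]
  split_ifs with h
  · generalize hu : f (a, false) = u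
    generalize hv : f (a, true) = v
    cases b
    · simp only [Bool.not_false, hu, hv]
      clear hu hv
      revert u v; decide
    · simp only [Bool.not_true, hu, hv]
      clear hu hv
      revert u v; decide
  · simp

/-- Interlace pairing of jump functions. -/
def pairM {n : ℕ} (G : Fin n → HalfEdge n → ZMod 2) (i j : Fin n) : ZMod 2 :=
  G j (i, false) + G j (i, true)

theorem pairM_symm {n : ℕ} (σ : Equiv.Perm (HalfEdge n)) (G : Fin n → HalfEdge n → ZMod 2)
    (hG : ∀ i, cobd σ (G i) = chordFn i) (i j : Fin n) (hij : i ≠ j) :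
    pairM G i j = pairM G j i := by
  unfold pairM
  rw [← sum_mul_chordFn, ← sum_mul_chordFn, ← z2_add_eq_zero]
  have h0 : ∑ x, chordFn i x * chordFn j x = 0 := by
    apply Finset.sum_eq_zero
    intro x _
    unfold chordFn
    by_cases h : x.1 = i
    · simp [h, hij]
    · simp [h]
  have hs : ∑ x, G i (σ x) * G j (σ x) = ∑ x, G i x * G j x :=
    Equiv.sum_comp σ (fun x => G i x * G j x)
  have hval : ∀ i x, chordFn i x = G i (σ x) + G i x := fun i x => (congrFun (hG i) x).symm
  rw [← Finset.sum_add_distrib]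
  have : ∀ x, G j x * chordFn i x + G i x * chordFn j x =
      chordFn i x * chordFn j x + (G i (σ x) * G j (σ x) + G i x * G j x) := by
    intro x
    rw [hval, hval]
    generalize G i x = a
    generalize G j x = b
    generalize G i (σ x) = c
    generalize G j (σ x) = d
    revert a b c d; decide
  simp_rw [this]
  rw [Finset.sum_add_distrib, Finset.sum_add_distrib, hs, h0, zero_add]
  exact CharTwo.add_self_eq_zero _

theorem pairM_self {n : ℕ} (σ : Equiv.Perm (HalfEdge n)) (h : orbitCount σ = 1)
    (G : Fin n → HalfEdge n → ZMod 2)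
    (hG : ∀ i, cobd σ (G i) = chordFn i) (i : Fin n) : pairM G i i = 1 := by
  have hval : ∀ x, G i (σ x) + G i x = chordFn i x := fun x => congrFun (hG i) x
  apply jump_self σ h (i, false) (i, true) (by simp) (G i)
  · rw [hval]; simp [chordFn]
  · rintro ⟨a, b⟩ h1 h2
    rw [hval]
    have : a ≠ i := by
      rintro rfl
      cases b <;> simp_all
    simp [chordFn, this]

/-- Off-diagonal interlace matrix. -/
def chordMat {n : ℕ} (G : Fin n → HalfEdge n → ZMod 2) (H : Finset (Fin n)) :
    Matrix H H (ZMod 2) :=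
  fun i j => if (i : Fin n) = j then 0 else pairM G i j

theorem mulVec_chordMat {n : ℕ} (σ : Equiv.Perm (HalfEdge n)) (h : orbitCount σ = 1)
    (G : Fin n → HalfEdge n → ZMod 2)
    (hG : ∀ i, cobd σ (G i) = chordFn i) (H : Finset (Fin n)) (x : H → ZMod 2) (i : H) :
    (chordMat G H).mulVec x i = (∑ j : H, x j * pairM G i j) + x i := by
  have : ∀ j : H, chordMat G H i j * x j = x j * pairM G i j + if i = j then x j else 0 := by
    intro j
    unfold chordMat
    by_cases hij : i = j
    · subst hij
      simp only [if_true, pairM_self σ h G hG]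
      generalize x i = a
      revert a; decide
    · have : (i : Fin n) ≠ j := fun e => hij (Subtype.ext e)
      simp [hij, this, mul_comm]
  simp only [Matrix.mulVec, dotProduct, this, Finset.sum_add_distrib]
  simp

theorem orbit_formula {n : ℕ} (σ : Equiv.Perm (HalfEdge n)) (h : orbitCount σ = 1)
    (G : Fin n → HalfEdge n → ZMod 2)
    (hG : ∀ i, cobd σ (G i) = chordFn i) (H : Finset (Fin n)) :
    orbitCount (σ * flipOn n H) =
      Module.finrank (ZMod 2) (LinearMap.ker (chordMat G H).mulVecLin) + 1 := by
  classical
  have hval : ∀ i x, G i (σ x) = G i x + chordFn i x := by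
    intro i x
    rw [← hG i]
    show _ = G i x + (G i (σ x) + G i x)
    generalize G i x = a
    generalize G i (σ x) = b
    revert a b; decide
  let K := LinearMap.ker (chordMat G H).mulVecLin
  let Ψ : ((H → ZMod 2) × ZMod 2) →ₗ[ZMod 2] (HalfEdge n → ZMod 2) :=
    { toFun := fun p y => (∑ i : H, p.1 i * G i y) + p.2
      map_add' := by
        intro p q; ext y
        simp [add_mul, Finset.sum_add_distrib]; ring
      map_smul' := by
        intro c p; ext y
        simp [Finset.mul_sum, mul_add, mul_assoc] }
  let Φ : (K × ZMod 2) →ₗ[ZMod 2] (HalfEdge n → ZMod 2) :=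
    Ψ ∘ₗ (LinearMap.prodMap K.subtype LinearMap.id)
  have hΦ : ∀ (x : K) (c : ZMod 2) y, Φ (x, c) y = (∑ i : H, x.1 i * G i y) + c :=
    fun _ _ _ => rfl
  have hK : ∀ x : H → ZMod 2, x ∈ K ↔ ∀ i : H, ∑ j : H, x j * pairM G i j = x i := by
    intro x
    show (chordMat G H).mulVec x = 0 ↔ _
    rw [funext_iff]
    refine forall_congr' fun i => ?_
    rw [mulVec_chordMat σ h G hG]
    exact z2_add_eq_zero _ _
  -- value of the chord pairing on a combination
  have hpair : ∀ (x : H → ZMod 2) (c : ZMod 2) (i : Fin n),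
      ((∑ j : H, x j * G j (i, false)) + c) + ((∑ j : H, x j * G j (i, true)) + c)
        = ∑ j : H, x j * pairM G i j := by
    intro x c i
    simp only [pairM, mul_add, Finset.sum_add_distrib]
    generalize (∑ j : H, x j * G j (i, false)) = a
    generalize (∑ j : H, x j * G j (i, true)) = b
    revert a b c; decide
  have hinv : ∀ f : HalfEdge n → ZMod 2, f ∈ invFun2 (σ * flipOn n H) ↔
      ∀ y, f (σ y) = f y + ∑ i : H, (f (i, false) + f (i, true)) * chordFn (i : Fin n) y := by
    intro f
    simp_rw [← flip_formula]
    have hflip : ∀ y, flipOn n H (flipOn n H y) = y := by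
      intro y
      show (fun p : HalfEdge n => if p.1 ∈ H then (p.1, !p.2) else p)
        ((fun p : HalfEdge n => if p.1 ∈ H then (p.1, !p.2) else p) y) = y
      by_cases h : y.1 ∈ H <;> simp [h]
    constructor
    · intro hf y
      have := hf (flipOn n H y)
      rwa [Perm.mul_apply, hflip] at this
    · intro hf y
      rw [Perm.mul_apply, hf, hflip]
  have hinj : Function.Injective Φ := by
    rw [← LinearMap.ker_eq_bot, LinearMap.ker_eq_bot']
    rintro ⟨x, c⟩ h0
    have hx : x = 0 := by
      apply Subtype.ext
      funext i
      have := (hK x.1).1 x.2 i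
      rw [← hpair x.1 c i, ← hΦ, ← hΦ, h0] at this
      simpa using this.symm
    subst hx
    have hne : Nonempty (HalfEdge n) := by
      by_contra hne
      rw [not_nonempty_iff] at hne
      rw [← finrank_invFun2, Module.finrank_zero_of_subsingleton] at h
      exact absurd h (by norm_num)
    obtain ⟨y⟩ := hne
    have := hΦ 0 c y
    rw [h0] at this
    have hc : c = 0 := by simpa using this.symm
    rw [hc]; rfl
  have hr : LinearMap.range Φ = invFun2 (σ * flipOn n H) := by
    ext f
    rw [hinv]
    constructor
    · rintro ⟨⟨x, c⟩, rfl⟩ y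
      have hx := (hK x.1).1 x.2
      simp only [hΦ, hpair, hx, hval, mul_add, Finset.sum_add_distrib]
      ring
    · intro hf
      let x : H → ZMod 2 := fun i => f (i, false) + f (i, true)
      let d : HalfEdge n → ZMod 2 := fun y => f y + ∑ i : H, x i * G i y
      have hd : d ∈ invFun2 σ := by
        intro y
        simp only [d, hf, hval, mul_add, Finset.sum_add_distrib]
        show f y + (∑ i : H, x i * chordFn (i : Fin n) y) + _ = _
        generalize (∑ i : H, x i * chordFn (i : Fin n) y) = a
        generalize (∑ i : H, x i * G (i : Fin n) y) = b
        generalize f y = e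
        revert a b e; decide
      obtain ⟨c, hc⟩ : ∃ c, ∀ y, d y = c := by
        by_cases hne : Nonempty (HalfEdge n)
        · obtain ⟨y0⟩ := hne
          exact ⟨d y0, fun y => invFun2_const σ h d hd y y0⟩
        · exact ⟨0, fun y => (hne ⟨y⟩).elim⟩
      have hfy : ∀ y, f y = (∑ i : H, x i * G i y) + c := by
        intro y
        rw [← hc y]
        simp only [d]
        generalize (∑ i : H, x i * G (i : Fin n) y) = b
        generalize f y = e
        revert b e; decide
      have hx : x ∈ K := by
        rw [hK]
        intro i
        rw [← hpair x c i, ← hfy, ← hfy]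
      refine ⟨(⟨x, hx⟩, c), ?_⟩
      funext y
      rw [hΦ, hfy]
  rw [← finrank_invFun2, ← hr, LinearMap.finrank_range_of_inj hinj, Module.finrank_prod,
    Module.finrank_self]

theorem pair_orbit {n : ℕ} (σ : Equiv.Perm (HalfEdge n)) (h : orbitCount σ = 1)
    (G : Fin n → HalfEdge n → ZMod 2)
    (hG : ∀ i, cobd σ (G i) = chordFn i) (i j : Fin n) (hij : i ≠ j) :
    orbitCount (σ * flipOn n {i, j}) = 1 ↔ pairM G i j = 1 := by
  rw [orbit_formula σ h G hG]
  have hs := pairM_symm σ G hG i j hij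
  rw [Nat.add_eq_right, Submodule.finrank_eq_zero, LinearMap.ker_eq_bot']
  let i' : ({i, j} : Finset (Fin n)) := ⟨i, by simp⟩
  let j' : ({i, j} : Finset (Fin n)) := ⟨j, by simp⟩
  have hcase : ∀ a : ({i, j} : Finset (Fin n)), a = i' ∨ a = j' := by
    rintro ⟨a, ha⟩
    simp only [Finset.mem_insert, Finset.mem_singleton] at ha
    rcases ha with rfl | rfl
    · left; rfl
    · right; rfl
  have hsum : ∀ (x : ({i, j} : Finset (Fin n)) → ZMod 2) (a : ({i, j} : Finset (Fin n))),
      (chordMat G {i, j}).mulVec x a = chordMat G {i, j} a i' * x i' +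
        chordMat G {i, j} a j' * x j' := by
    intro x a
    have hu : (Finset.univ : Finset ({i, j} : Finset (Fin n))) = {i', j'} := by
      ext a
      rw [Finset.mem_insert, Finset.mem_singleton]
      exact iff_of_true (Finset.mem_univ a) (hcase a)
    simp only [Matrix.mulVec, dotProduct, hu]
    rw [Finset.sum_pair]
    intro e
    exact hij (congrArg Subtype.val e)
  have e11 : chordMat G {i, j} i' i' = 0 := by simp [chordMat]
  have e22 : chordMat G {i, j} j' j' = 0 := by simp [chordMat]
  have e12 : chordMat G {i, j} i' j' = pairM G i j := by simp [chordMat, i', j', hij]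
  have e21 : chordMat G {i, j} j' i' = pairM G i j := by simp [chordMat, i', j', hij.symm, hs]
  constructor
  · intro hk
    by_contra hne
    have h0 : pairM G i j = 0 := by
      revert hne
      generalize pairM G i j = a
      revert a; decide
    have := hk (fun _ => 1) (by
      funext a
      show (chordMat G {i, j}).mulVec _ a = 0
      rw [hsum]
      rcases hcase a with rfl | rfl
      · rw [e11, e12, h0]; simp
      · rw [e22, e21, h0]; simp)
    exact one_ne_zero (congrFun this i')
  · intro h1 x hx
    have hx' : ∀ a, (chordMat G {i, j}).mulVec x a = 0 := fun a => congrFun hx a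
    have a1 := hx' i'
    have a2 := hx' j'
    rw [hsum, e11, e12, h1] at a1
    rw [hsum, e22, e21, h1] at a2
    funext a
    rcases hcase a with rfl | rfl
    · simpa using a2
    · simpa using a1

theorem flipOn_mul {n : ℕ} (A B : Finset (Fin n)) :
    flipOn n A * flipOn n B = flipOn n (symmDiff A B) := by
  ext1 ⟨a, b⟩
  have e : ∀ H (p : HalfEdge n), flipOn n H p = if p.1 ∈ H then (p.1, !p.2) else p :=
    fun _ _ => rfl
  rw [Perm.mul_apply, e, e, e]
  by_cases hA : a ∈ A <;> by_cases hB : a ∈ B <;> simp [Finset.mem_symmDiff, hA, hB]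

theorem genus_eq_half_rank {n : ℕ} (σ₀ : Equiv.Perm (HalfEdge n))
    (Q : Finset (Fin n)) (hQ : faceCount σ₀ Q = 1) :
    ((intersectionMatrix σ₀ Q).rank : ℤ) = 1 - (orbitCount σ₀ : ℤ) + Q.card := by
  classical
  obtain ⟨σ, hσ⟩ : ∃ σ, σ = σ₀ * flipOn n Q := ⟨_, rfl⟩
  have h : orbitCount σ = 1 := by rw [hσ]; exact hQ
  have hback : ∀ H, σ₀ * flipOn n (symmDiff Q H) = σ * flipOn n H := by
    intro H
    rw [hσ, mul_assoc, flipOn_mul]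
  have h0 : σ₀ = σ * flipOn n Q := by
    rw [← hback, symmDiff_self]
    ext1 x
    simp [flipOn]
  choose G hG using fun i : Fin n => exists_cobd σ h (chordFn i) (sum_chordFn i)
  have hmat : intersectionMatrix σ₀ Q = chordMat G Q := by
    funext i j
    unfold intersectionMatrix chordMat faceCount
    rw [hback]
    by_cases hij : (i : Fin n) = j
    · simp [hij]
    · simp only [pair_orbit σ h G hG _ _ hij, hij, ne_eq, not_false_eq_true, true_and, if_false]
      generalize pairM G i j = a
      revert a; decide
  have hf := orbit_formula σ h G hG Q
  rw [← h0] at hf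
  have hr := LinearMap.finrank_range_add_finrank_ker (chordMat G Q).mulVecLin
  rw [Module.finrank_fintype_fun_eq_card, Fintype.card_coe] at hr
  rw [hmat, Matrix.rank, hf]
  push_cast
  omega
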